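/- For every sequential qubit strategy (four qubit states ρ_x, instruments with Kraus operators K_{b|y}, and measurements C_{c|z}) whose first witness satisfies W_AB = α for some α ∈ [1/2, (2+√2)/4], the second witness is bounded as W_AC ≤ (4 + √2 + √(16α − 16α² − 2))/8. -/

import Mathlib

open Matrix ComplexOrder

noncomputable section

/-- The bit `x_y` of `x = (x₀, x₁)`. -/
def bit (x : Bool × Bool) (y : Bool) : Bool := if y then x.2 else x.1

/-- Alice–Bob witness `W_AB = (1/8) ∑_{x,y} tr[ρ_x K_{x_y|y}† K_{x_y|y}]`. -/
def WAB (ρ : Bool × Bool → Matrix (Fin 2) (Fin 2) ℂ)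
    (K : Bool → Bool → Matrix (Fin 2) (Fin 2) ℂ) : ℝ :=
  (1 / 8) * ∑ x : Bool × Bool, ∑ y : Bool,
    ((ρ x * ((K y (bit x y))ᴴ * K y (bit x y))).trace).re

/-- Alice–Charlie witness
`W_AC = (1/16) ∑_{x,y,b,z} tr[K_{b|y} ρ_x K_{b|y}† C_{x_z|z}]`. -/
def WAC (ρ : Bool × Bool → Matrix (Fin 2) (Fin 2) ℂ)
    (K C : Bool → Bool → Matrix (Fin 2) (Fin 2) ℂ) : ℝ :=
  (1 / 16) * ∑ x : Bool × Bool, ∑ y : Bool, ∑ b : Bool, ∑ z : Bool,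
    ((K y b * ρ x * (K y b)ᴴ * C z (bit x z)).trace).re

/-- A sequential qubit strategy: four qubit states, two instruments (Kraus
operators), and two binary POVMs. -/
def ValidStrategy (ρ : Bool × Bool → Matrix (Fin 2) (Fin 2) ℂ)
    (K C : Bool → Bool → Matrix (Fin 2) (Fin 2) ℂ) : Prop :=
  (∀ x, (ρ x).PosSemidef ∧ (ρ x).trace = 1) ∧
  (∀ y, (K y false)ᴴ * K y false + (K y true)ᴴ * K y true = 1) ∧
  (∀ z b, (C z b).PosSemidef) ∧
  (∀ z, C z false + C z true = 1)

abbrev Q3 := EuclideanSpace ℝ (Fin 3)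

/-- half the trace -/
def tv (A : Matrix (Fin 2) (Fin 2) ℂ) : ℝ := ((A 0 0).re + (A 1 1).re) / 2

/-- Bloch vector -/
def bv (A : Matrix (Fin 2) (Fin 2) ℂ) : Q3 :=
  !₂[(A 0 1).re, -(A 0 1).im, ((A 0 0).re - (A 1 1).re) / 2]

lemma bv_add (A B : Matrix (Fin 2) (Fin 2) ℂ) : bv (A + B) = bv A + bv B := by
  ext i; fin_cases i <;> simp [bv] <;> ring

lemma bv_sub (A B : Matrix (Fin 2) (Fin 2) ℂ) : bv (A - B) = bv A - bv B := by
  ext i; fin_cases i <;> simp [bv] <;> ring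

lemma bv_one : bv 1 = 0 := by
  ext i; fin_cases i <;> simp [bv]

lemma tv_add (A B : Matrix (Fin 2) (Fin 2) ℂ) : tv (A + B) = tv A + tv B := by
  simp [tv]; ring

lemma tv_sub (A B : Matrix (Fin 2) (Fin 2) ℂ) : tv (A - B) = tv A - tv B := by
  simp [tv]; ring

lemma tv_one : tv 1 = 1 := by simp [tv]

lemma tv_trace (A : Matrix (Fin 2) (Fin 2) ℂ) : A.trace.re = 2 * tv A := by
  simp [tv, Matrix.trace_fin_two]; ring

lemma q3_inner (x y : Q3) : inner ℝ x y = x 0 * y 0 + x 1 * y 1 + x 2 * y 2 := by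
  simp [PiLp.inner_apply, Fin.sum_univ_three]; ring

lemma q3_norm (x : Q3) : ‖x‖ ^ 2 = x 0 ^ 2 + x 1 ^ 2 + x 2 ^ 2 := by
  rw [← real_inner_self_eq_norm_sq, q3_inner]; ring

lemma herm_entries {A : Matrix (Fin 2) (Fin 2) ℂ} (hA : A.IsHermitian) :
    (A 0 0).im = 0 ∧ (A 1 1).im = 0 ∧ (A 1 0).re = (A 0 1).re ∧ (A 1 0).im = -(A 0 1).im := by
  have h0 := congrArg Complex.im (hA.apply 0 0)
  have h1 := congrArg Complex.im (hA.apply 1 1)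
  have h2 := congrArg Complex.im (hA.apply 1 0)
  have h3 := congrArg Complex.re (hA.apply 1 0)
  simp at h0 h1 h2 h3
  refine ⟨by linarith, by linarith, by linarith, by linarith⟩

lemma trace_herm {A B : Matrix (Fin 2) (Fin 2) ℂ} (hA : A.IsHermitian) (hB : B.IsHermitian) :
    ((A * B).trace).re = 2 * (tv A * tv B + inner ℝ (bv A) (bv B)) := by
  obtain ⟨a0, a1, a2, a3⟩ := herm_entries hA
  obtain ⟨b0, b1, b2, b3⟩ := herm_entries hB
  rw [q3_inner]
  simp [Matrix.trace_fin_two, Matrix.mul_apply, Fin.sum_univ_two, tv, bv, a0, a1, a2, a3,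
    b0, b1, b2, b3]
  ring

lemma det_herm {A : Matrix (Fin 2) (Fin 2) ℂ} (hA : A.IsHermitian) :
    A.det.re = tv A ^ 2 - ‖bv A‖ ^ 2 := by
  obtain ⟨a0, a1, a2, a3⟩ := herm_entries hA
  rw [q3_norm]
  simp [Matrix.det_fin_two, tv, bv, a0, a1, a2, a3]
  ring

lemma psd_norm {A : Matrix (Fin 2) (Fin 2) ℂ} (hA : A.PosSemidef) : ‖bv A‖ ≤ tv A := by
  have h1 := (Complex.le_def.1 hA.det_nonneg).1
  have h2 := (Complex.le_def.1 hA.trace_nonneg).1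
  rw [tv_trace] at h2
  rw [det_herm hA.1] at h1
  simp at h1 h2
  exact abs_le_of_sq_le_sq' (by linarith) h2 |>.2

lemma kraus_det (K : Matrix (Fin 2) (Fin 2) ℂ) :
    tv (Kᴴ * K) ^ 2 - ‖bv (Kᴴ * K)‖ ^ 2 = Complex.normSq K.det := by
  rw [← det_herm (Matrix.isHermitian_conjTranspose_mul_self K), Matrix.det_mul,
    Matrix.det_conjTranspose]
  simp [Complex.normSq_apply]

lemma kraus_bound (K E C0 C1 : Matrix (Fin 2) (Fin 2) ℂ) (hE : E.IsHermitian) (hE0 : tv E = 0)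
    (h0 : C0.PosSemidef) (h1 : C1.PosSemidef) (h : C0 + C1 = 1) :
    ((K * E * Kᴴ * (C0 - C1)).trace).re ≤ 2 * √(‖bv E‖ ^ 2 * tv (Kᴴ * K) ^ 2
      - (‖bv E‖ ^ 2 * ‖bv (Kᴴ * K)‖ ^ 2 - (inner ℝ (bv E) (bv (Kᴴ * K))) ^ 2)) := by
  have hH : (K * E * Kᴴ).IsHermitian := Matrix.isHermitian_mul_mul_conjTranspose K hE
  have hM := Matrix.isHermitian_conjTranspose_mul_self K
  have ht : tv (K * E * Kᴴ) = inner ℝ (bv E) (bv (Kᴴ * K)) := by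
    have e1 := trace_herm hE hM
    have e2 := tv_trace (K * E * Kᴴ)
    rw [Matrix.mul_assoc, Matrix.trace_mul_comm, Matrix.mul_assoc, e1, hE0] at e2
    rw [Matrix.mul_assoc]
    linarith
  have hd : ‖bv (K * E * Kᴴ)‖ ^ 2 = ‖bv E‖ ^ 2 * tv (Kᴴ * K) ^ 2
      - (‖bv E‖ ^ 2 * ‖bv (Kᴴ * K)‖ ^ 2 - (inner ℝ (bv E) (bv (Kᴴ * K))) ^ 2) := by
    have e1 := det_herm hH
    have e2 := det_herm hE
    have e3 := kraus_det K
    have e4 : E.det.im = 0 := by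
      obtain ⟨a0, a1, a2, a3⟩ := herm_entries hE
      simp [Matrix.det_fin_two, a0, a1, a2, a3]
      ring
    have e5 : (K * E * Kᴴ).det.re = Complex.normSq K.det * E.det.re := by
      rw [Matrix.det_mul, Matrix.det_mul, Matrix.det_conjTranspose]
      simp [Complex.normSq_apply, e4]
      ring
    rw [ht] at e1
    rw [hE0] at e2
    rw [← e3, e2] at e5
    linear_combination e1 - e5
  rw [← hd, Real.sqrt_sq (norm_nonneg _), trace_herm hH (h0.1.sub h1.1)]
  have hpos : |tv (K * E * Kᴴ)| ≤ ‖bv (K * E * Kᴴ)‖ := by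
    apply abs_le_of_sq_le_sq _ (norm_nonneg _)
    rw [hd, ht]
    have := kraus_det K
    have h2 := Complex.normSq_nonneg K.det
    nlinarith [mul_nonneg (sq_nonneg ‖bv E‖) h2]
  have n0 := psd_norm h0
  have n1 := psd_norm h1
  have t1 : tv C0 + tv C1 = 1 := by rw [← tv_add, h, tv_one]
  have b1 : bv C0 + bv C1 = 0 := by rw [← bv_add, h, bv_one]
  have b2 : bv C1 = - bv C0 := by rw [eq_neg_iff_add_eq_zero, add_comm]; exact b1
  rw [b2, norm_neg] at n1
  rw [tv_sub, bv_sub, b2, sub_neg_eq_add, inner_add_right]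
  have hi := real_inner_le_norm (bv (K * E * Kᴴ)) (bv C0)
  set N := ‖bv (K * E * Kᴴ)‖
  set T := tv (K * E * Kᴴ)
  have hN : 0 ≤ N := norm_nonneg _
  have : T * (tv C0 - tv C1) ≤ N * |tv C0 - tv C1| := by
    refine (le_abs_self _).trans ?_
    rw [abs_mul]
    exact mul_le_mul_of_nonneg_right hpos (abs_nonneg _)
  have h4 : |tv C0 - tv C1| + 2 * ‖bv C0‖ ≤ 1 := by
    rcases abs_cases (tv C0 - tv C1) with ⟨h, _⟩ | ⟨h, _⟩ <;> rw [h] <;> linarith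
  nlinarith [mul_le_mul_of_nonneg_left h4 hN]

lemma sqrt_pair (A B m0 m1 : ℝ) (hA : 0 ≤ A) (hB : 0 ≤ B) (h0 : 0 ≤ m0) (h1 : 0 ≤ m1)
    (hm : m0 + m1 = 1) (hb0 : B ≤ A * m0 ^ 2) (hb1 : B ≤ A * m1 ^ 2) :
    √(A * m0 ^ 2 - B) + √(A * m1 ^ 2 - B) ≤ √(A - 4 * B) := by
  apply Real.le_sqrt_of_sq_le
  have e0 := Real.sq_sqrt (sub_nonneg.2 hb0)
  have e1 := Real.sq_sqrt (sub_nonneg.2 hb1)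
  have hp : B ≤ A * (m0 * m1) := by
    rcases le_total m0 m1 with h | h
    · nlinarith [mul_nonneg hA (mul_nonneg h0 (sub_nonneg.2 h))]
    · nlinarith [mul_nonneg hA (mul_nonneg h1 (sub_nonneg.2 h))]
  have hc : √(A * m0 ^ 2 - B) * √(A * m1 ^ 2 - B) ≤ A * (m0 * m1) - B := by
    rw [← Real.sqrt_mul (sub_nonneg.2 hb0)]
    apply Real.sqrt_le_iff.2 ⟨by linarith, ?_⟩
    nlinarith [mul_nonneg (mul_nonneg hA hB) (sq_nonneg (m0 - m1))]
  have hm1 : m1 = 1 - m0 := by linarith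
  have : (m0 + m1) ^ 2 = 1 := by rw [hm]; norm_num
  nlinarith

lemma instr_bound (K0 K1 E C0 C1 : Matrix (Fin 2) (Fin 2) ℂ) (hE : E.IsHermitian)
    (hE0 : tv E = 0) (hK : K0ᴴ * K0 + K1ᴴ * K1 = 1)
    (h0 : C0.PosSemidef) (h1 : C1.PosSemidef) (h : C0 + C1 = 1) :
    ((K0 * E * K0ᴴ * (C0 - C1)).trace).re + ((K1 * E * K1ᴴ * (C0 - C1)).trace).re
      ≤ 2 * √(‖bv E‖ ^ 2 * (1 - ‖bv (K0ᴴ * K0 - K1ᴴ * K1)‖ ^ 2)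
        + (inner ℝ (bv E) (bv (K0ᴴ * K0 - K1ᴴ * K1))) ^ 2) := by
  have k0 := kraus_bound K0 E C0 C1 hE hE0 h0 h1 h
  have k1 := kraus_bound K1 E C0 C1 hE hE0 h0 h1 h
  have p0 := psd_norm (Matrix.posSemidef_conjTranspose_mul_self K0)
  have p1 := psd_norm (Matrix.posSemidef_conjTranspose_mul_self K1)
  have d0 := kraus_det K0
  have d1 := kraus_det K1
  have n0 := Complex.normSq_nonneg K0.det
  have n1 := Complex.normSq_nonneg K1.det
  have t1 : tv (K0ᴴ * K0) + tv (K1ᴴ * K1) = 1 := by rw [← tv_add, hK, tv_one]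
  have b1 : bv (K0ᴴ * K0) + bv (K1ᴴ * K1) = 0 := by rw [← bv_add, hK, bv_one]
  have b2 : bv (K1ᴴ * K1) = - bv (K0ᴴ * K0) := by
    rw [eq_neg_iff_add_eq_zero, add_comm]; exact b1
  rw [bv_sub, b2, sub_neg_eq_add, ← two_smul ℝ, norm_smul, inner_smul_right]
  rw [b2, norm_neg, inner_neg_right, neg_sq] at k1
  rw [b2, norm_neg] at d1 p1
  have hcs := real_inner_mul_inner_self_le (bv E) (bv (K0ᴴ * K0))
  rw [real_inner_self_eq_norm_sq, real_inner_self_eq_norm_sq] at hcs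
  have hn := norm_nonneg (bv (K0ᴴ * K0))
  have key := sqrt_pair (‖bv E‖ ^ 2) (‖bv E‖ ^ 2 * ‖bv (K0ᴴ * K0)‖ ^ 2
      - (inner ℝ (bv E) (bv (K0ᴴ * K0))) ^ 2) (tv (K0ᴴ * K0)) (tv (K1ᴴ * K1)) (sq_nonneg _)
      (by nlinarith) (by linarith) (by linarith) t1
      (by nlinarith [mul_nonneg (sq_nonneg ‖bv E‖) n0, sq_nonneg (inner ℝ (bv E) (bv (K0ᴴ * K0)))])
      (by nlinarith [mul_nonneg (sq_nonneg ‖bv E‖) n1, sq_nonneg (inner ℝ (bv E) (bv (K0ᴴ * K0)))])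
  have e : ‖bv E‖ ^ 2 * (1 - (‖(2:ℝ)‖ * ‖bv (K0ᴴ * K0)‖) ^ 2)
        + (2 * inner ℝ (bv E) (bv (K0ᴴ * K0))) ^ 2 = ‖bv E‖ ^ 2 - 4 * (‖bv E‖ ^ 2 *
        ‖bv (K0ᴴ * K0)‖ ^ 2 - (inner ℝ (bv E) (bv (K0ᴴ * K0))) ^ 2) := by
    rw [Real.norm_eq_abs, abs_of_pos (by norm_num : (0:ℝ) < 2)]; ring
  rw [e]
  linarith

lemma trig_bound (r0 r1 x y τ : ℝ) (h : r0 ^ 2 + r1 ^ 2 + 2 * (r0 * r1 * Real.cos (x + y)) ≤ 4)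
    (h' : r0 ^ 2 + r1 ^ 2 - 2 * (r0 * r1 * Real.cos (x + y)) ≤ 4) :
    (r1 * Real.cos (y + τ) + r0 * Real.cos (x + τ)) ^ 2
      + (r0 * Real.cos (x - τ) + r1 * Real.cos (y - τ)) ^ 2 ≤ 8 := by
  simp only [Real.cos_add, Real.cos_sub] at *
  have hx := Real.sin_sq_add_cos_sq x
  have hy := Real.sin_sq_add_cos_sq y
  have ht := Real.sin_sq_add_cos_sq τ
  set cx := Real.cos x
  set sx := Real.sin x
  set cy := Real.cos y
  set sy := Real.sin y
  set ct := Real.cos τ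
  set st := Real.sin τ
  have hP : (r0 * cx + r1 * cy) ^ 2 ≤ 4 := by
    have : (r0 * cx + r1 * cy) ^ 2 + (r0 * sx - r1 * sy) ^ 2
      = r0 ^ 2 + r1 ^ 2 + 2 * (r0 * r1 * (cx * cy - sx * sy)) := by
      linear_combination r0 ^ 2 * hx + r1 ^ 2 * hy
    nlinarith [sq_nonneg (r0 * sx - r1 * sy)]
  have hQ : (r0 * sx + r1 * sy) ^ 2 ≤ 4 := by
    have : (r0 * sx + r1 * sy) ^ 2 + (r0 * cx - r1 * cy) ^ 2
      = r0 ^ 2 + r1 ^ 2 - 2 * (r0 * r1 * (cx * cy - sx * sy)) := by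
      linear_combination r0 ^ 2 * hx + r1 ^ 2 * hy
    nlinarith [sq_nonneg (r0 * cx - r1 * cy)]
  have e : (r1 * (cy * ct - sy * st) + r0 * (cx * ct - sx * st)) ^ 2
      + (r0 * (cx * ct + sx * st) + r1 * (cy * ct + sy * st)) ^ 2
      = 2 * (r0 * cx + r1 * cy) ^ 2 * ct ^ 2 + 2 * (r0 * sx + r1 * sy) ^ 2 * st ^ 2 := by ring
  rw [e]
  nlinarith [mul_le_mul_of_nonneg_right hP (sq_nonneg ct),
    mul_le_mul_of_nonneg_right hQ (sq_nonneg st)]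

/-- angle form of the one-sided geometric constraint -/
lemma angle_exists (u v b : Q3) (hu : ‖u‖ = 1) (hv : ‖v‖ = 1) (hb : ‖b‖ ≤ 1) (γ : ℝ)
    (hγ : Real.cos γ = |inner ℝ u v|) (hγ' : 0 ≤ Real.sin γ) :
    ∃ θ : ℝ, √(1 - ‖b‖ ^ 2 + (inner ℝ v b) ^ 2) = Real.cos θ ∧
      inner ℝ u b ≤ Real.cos (γ - θ) := by
  have hcs := real_inner_mul_inner_self_le v b
  rw [real_inner_self_eq_norm_sq, real_inner_self_eq_norm_sq, hv] at hcs
  set q := √(‖b‖ ^ 2 - (inner ℝ v b) ^ 2) with hq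
  have hb2 : ‖b‖ ^ 2 ≤ 1 := by nlinarith [norm_nonneg b]
  have hq2 : q ^ 2 = ‖b‖ ^ 2 - (inner ℝ v b) ^ 2 := Real.sq_sqrt (by nlinarith)
  have hq0 : 0 ≤ q := Real.sqrt_nonneg _
  have hq1 : q ≤ 1 := by nlinarith [sq_nonneg (inner ℝ v b : ℝ)]
  refine ⟨Real.arcsin q, ?_, ?_⟩
  · rw [Real.cos_arcsin, hq2]; congr 1; ring
  · rw [Real.cos_sub, Real.cos_arcsin, Real.sin_arcsin (by linarith) hq1, hγ]
    have hs : |inner ℝ v b| ≤ √(1 - q ^ 2) := by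
      apply Real.le_sqrt_of_sq_le
      rw [sq_abs]; linarith
    have hsin : Real.sin γ = ‖u - (inner ℝ u v : ℝ) • v‖ := by
      rw [← sq_eq_sq₀ hγ' (norm_nonneg _), norm_sub_sq_real, inner_smul_right, norm_smul, hu, hv,
        Real.norm_eq_abs, Real.sin_sq, hγ]
      simp only [mul_one, sq_abs]; ring
    have hqn : q = ‖b - (inner ℝ v b : ℝ) • v‖ := by
      rw [← sq_eq_sq₀ hq0 (norm_nonneg _), hq2, norm_sub_sq_real, inner_smul_right, norm_smul, hv,
        Real.norm_eq_abs, real_inner_comm v b]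
      simp only [mul_one, sq_abs]; ring
    have hvv : (inner ℝ v v : ℝ) = 1 := by rw [real_inner_self_eq_norm_sq, hv]; norm_num
    have hi := real_inner_le_norm (u - (inner ℝ u v : ℝ) • v) (b - (inner ℝ v b : ℝ) • v)
    rw [← hsin, ← hqn] at hi
    simp only [inner_sub_left, inner_sub_right, inner_smul_left, inner_smul_right, hvv] at hi
    simp at hi
    have h2 : (inner ℝ u v : ℝ) * inner ℝ v b ≤ |inner ℝ u v| * √(1 - q ^ 2) := by
      refine (le_abs_self _).trans ?_
      rw [abs_mul]
      exact mul_le_mul_of_nonneg_left hs (abs_nonneg _)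
    nlinarith

lemma unit_exists (e : Q3) : ∃ u : Q3, ‖u‖ = 1 ∧ e = ‖e‖ • u := by
  by_cases h : e = 0
  · obtain ⟨u, hu⟩ := exists_norm_eq Q3 (zero_le_one (α := ℝ))
    exact ⟨u, hu, by simp [h]⟩
  · have hn : ‖e‖ ≠ 0 := norm_ne_zero_iff.2 h
    refine ⟨‖e‖⁻¹ • e, by rw [norm_smul, norm_inv, norm_norm, inv_mul_cancel₀ hn], ?_⟩
    rw [smul_smul, mul_inv_cancel₀ hn, one_smul]

/-- the shrunken length -/
def XX (e b : Q3) : ℝ := √(‖e‖ ^ 2 * (1 - ‖b‖ ^ 2) + (inner ℝ e b) ^ 2)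

lemma XX_le (e b : Q3) : XX e b ≤ ‖e‖ := by
  have hcs := real_inner_mul_inner_self_le e b
  rw [real_inner_self_eq_norm_sq, real_inner_self_eq_norm_sq] at hcs
  apply Real.sqrt_le_iff.2 ⟨norm_nonneg _, by nlinarith⟩

lemma XX_smul (u b : Q3) (r : ℝ) (hr : 0 ≤ r) (hu : ‖u‖ = 1) :
    XX (r • u) b = r * √(1 - ‖b‖ ^ 2 + (inner ℝ u b) ^ 2) := by
  unfold XX
  rw [norm_smul, hu, inner_smul_left, Real.norm_of_nonneg hr]
  have : (r * 1) ^ 2 * (1 - ‖b‖ ^ 2) + ((starRingEnd ℝ) r * inner ℝ u b) ^ 2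
    = r ^ 2 * (1 - ‖b‖ ^ 2 + (inner ℝ u b) ^ 2) := by simp; ring
  rw [this, Real.sqrt_mul (sq_nonneg r), Real.sqrt_sq hr]

lemma cross_bound (e0 e1 b0 b1 : Q3) (hp : ‖e0 + e1‖ ≤ 2) (hm : ‖e0 - e1‖ ≤ 2)
    (hb0 : ‖b0‖ ≤ 1) (hb1 : ‖b1‖ ≤ 1) (hs : 0 ≤ inner ℝ e0 b0 + inner ℝ e1 b1) :
    (XX e1 b0 + XX e0 b1) ^ 2 + (inner ℝ e0 b0 + inner ℝ e1 b1) ^ 2 ≤ 8 := by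
  obtain ⟨u0, hu0, he0⟩ := unit_exists e0
  obtain ⟨u1, hu1, he1⟩ := unit_exists e1
  have hr0 := norm_nonneg e0
  have hr1 := norm_nonneg e1
  set r0 := ‖e0‖ with hr0'
  set r1 := ‖e1‖ with hr1'
  have hc1 : |inner ℝ u0 u1| ≤ 1 := by
    have := abs_real_inner_le_norm u0 u1
    rwa [hu0, hu1, mul_one] at this
  have hc0 := abs_nonneg (inner ℝ u0 u1 : ℝ)
  have hγ : Real.cos (Real.arccos |inner ℝ u0 u1|) = |inner ℝ u0 u1| :=
    Real.cos_arccos (by linarith) hc1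
  have hγ' : 0 ≤ Real.sin (Real.arccos |inner ℝ u0 u1|) := by
    rw [Real.sin_arccos]; exact Real.sqrt_nonneg _
  set γ := Real.arccos |inner ℝ u0 u1|
  obtain ⟨θ0, hX0, hS0⟩ := angle_exists u0 u1 b0 hu0 hu1 hb0 γ hγ hγ'
  obtain ⟨θ1, hX1, hS1⟩ := angle_exists u1 u0 b1 hu1 hu0 hb1 γ (by rw [real_inner_comm]; exact hγ) hγ'
  have hi : (inner ℝ e0 e1 : ℝ) = r0 * r1 * inner ℝ u0 u1 := by
    rw [he0, he1, inner_smul_left, inner_smul_right]; simp; ring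
  have hp2 : ‖e0 + e1‖ ^ 2 ≤ 4 := by nlinarith [norm_nonneg (e0 + e1)]
  have hm2 : ‖e0 - e1‖ ^ 2 ≤ 4 := by nlinarith [norm_nonneg (e0 - e1)]
  rw [norm_add_sq_real, hi, ← hr0', ← hr1'] at hp2
  rw [norm_sub_sq_real, hi, ← hr0', ← hr1'] at hm2
  have hg : (γ - θ0 + θ1) / 2 + (γ + θ0 - θ1) / 2 = γ := by ring
  have hcc : Real.cos γ = inner ℝ u0 u1 ∨ Real.cos γ = - inner ℝ u0 u1 := by
    rw [hγ]; exact abs_choice _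
  have T := trig_bound r0 r1 ((γ - θ0 + θ1) / 2) ((γ + θ0 - θ1) / 2) ((θ0 + θ1 - γ) / 2)
    (by rw [hg]; rcases hcc with h | h <;> rw [h] <;> linarith)
    (by rw [hg]; rcases hcc with h | h <;> rw [h] <;> linarith)
  have a1 : (γ + θ0 - θ1) / 2 + (θ0 + θ1 - γ) / 2 = θ0 := by ring
  have a2 : (γ - θ0 + θ1) / 2 + (θ0 + θ1 - γ) / 2 = θ1 := by ring
  have a3 : (γ - θ0 + θ1) / 2 - (θ0 + θ1 - γ) / 2 = γ - θ0 := by ring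
  have a4 : (γ + θ0 - θ1) / 2 - (θ0 + θ1 - γ) / 2 = γ - θ1 := by ring
  rw [a1, a2, a3, a4] at T
  have x0 : XX e1 b0 = r1 * Real.cos θ0 := by rw [he1, XX_smul _ _ _ hr1 hu1, hX0]
  have x1 : XX e0 b1 = r0 * Real.cos θ1 := by rw [he0, XX_smul _ _ _ hr0 hu0, hX1]
  have s0 : inner ℝ e0 b0 ≤ r0 * Real.cos (γ - θ0) := by
    rw [he0, inner_smul_left]; exact mul_le_mul_of_nonneg_left hS0 hr0
  have s1 : inner ℝ e1 b1 ≤ r1 * Real.cos (γ - θ1) := by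
    rw [he1, inner_smul_left]; exact mul_le_mul_of_nonneg_left hS1 hr1
  rw [x0, x1]
  have := pow_le_pow_left₀ hs (add_le_add s0 s1) 2
  linarith

lemma geom_bound (e0 e1 b0 b1 : Q3) (hp : ‖e0 + e1‖ ≤ 2) (hm : ‖e0 - e1‖ ≤ 2)
    (hb0 : ‖b0‖ ≤ 1) (hb1 : ‖b1‖ ≤ 1) (hs : 0 ≤ inner ℝ e0 b0 + inner ℝ e1 b1) :
    XX e0 b0 + XX e1 b0 + XX e0 b1 + XX e1 b1
      ≤ 2 * √2 + √(8 - (inner ℝ e0 b0 + inner ℝ e1 b1) ^ 2) := by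
  have h1 := XX_le e0 b0
  have h2 := XX_le e1 b1
  have h3 : XX e1 b0 + XX e0 b1 ≤ √(8 - (inner ℝ e0 b0 + inner ℝ e1 b1) ^ 2) :=
    Real.le_sqrt_of_sq_le (by linarith [cross_bound e0 e1 b0 b1 hp hm hb0 hb1 hs])
  have h4 : ‖e0‖ + ‖e1‖ ≤ 2 * √2 := by
    have h5 := parallelogram_law_with_norm ℝ e0 e1
    apply abs_le_of_sq_le_sq' _ (by positivity) |>.2
    rw [mul_pow, Real.sq_sqrt (by norm_num)]
    nlinarith [sq_nonneg (‖e0‖ - ‖e1‖), norm_nonneg (e0 + e1), norm_nonneg (e0 - e1)]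
  linarith

lemma diff_norm {A B : Matrix (Fin 2) (Fin 2) ℂ} (hA : A.PosSemidef) (hB : B.PosSemidef)
    (h : tv A + tv B ≤ 1) : ‖bv A - bv B‖ ≤ 1 := by
  have := norm_sub_le (bv A) (bv B)
  linarith [psd_norm hA, psd_norm hB]

lemma ab_term (R0 R1 K0 K1 : Matrix (Fin 2) (Fin 2) ℂ) (h0 : R0.IsHermitian)
    (h1 : R1.IsHermitian) (t0 : tv R0 = 1) (t1 : tv R1 = 1)
    (hK : K0ᴴ * K0 + K1ᴴ * K1 = 1) :
    ((R0 * (K0ᴴ * K0)).trace).re + ((R1 * (K1ᴴ * K1)).trace).re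
      = 2 + inner ℝ (bv (R0 - R1)) (bv (K0ᴴ * K0 - K1ᴴ * K1)) := by
  have hM : ∀ K : Matrix (Fin 2) (Fin 2) ℂ, (Kᴴ * K).IsHermitian :=
    fun K => Matrix.isHermitian_conjTranspose_mul_self K
  rw [trace_herm h0 (hM K0), trace_herm h1 (hM K1), t0, t1]
  have t1 : tv (K0ᴴ * K0) + tv (K1ᴴ * K1) = 1 := by rw [← tv_add, hK, tv_one]
  have b1 : bv (K0ᴴ * K0) + bv (K1ᴴ * K1) = 0 := by rw [← bv_add, hK, bv_one]
  have b2 : bv (K1ᴴ * K1) = - bv (K0ᴴ * K0) := by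
    rw [eq_neg_iff_add_eq_zero, add_comm]; exact b1
  rw [bv_sub, bv_sub, b2]
  simp only [inner_sub_left, inner_sub_right, inner_neg_right]
  linarith

lemma ac_term (R0 R1 K0 K1 C0 C1 : Matrix (Fin 2) (Fin 2) ℂ) (h0 : R0.IsHermitian)
    (h1 : R1.IsHermitian) (t0 : tv R0 = 1) (t1 : tv R1 = 1)
    (hK : K0ᴴ * K0 + K1ᴴ * K1 = 1)
    (p0 : C0.PosSemidef) (p1 : C1.PosSemidef) (h : C0 + C1 = 1) :
    ((K0 * R0 * K0ᴴ * C0).trace).re + ((K0 * R1 * K0ᴴ * C1).trace).re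
    + ((K1 * R0 * K1ᴴ * C0).trace).re + ((K1 * R1 * K1ᴴ * C1).trace).re
      ≤ 2 + XX (bv (R0 - R1)) (bv (K0ᴴ * K0 - K1ᴴ * K1)) := by
  have key := instr_bound K0 K1 (R0 - R1) C0 C1 (h0.sub h1) (by rw [tv_sub, t0, t1, sub_self])
    hK p0 p1 h
  have tot : ((K0 * (R0 + R1) * K0ᴴ).trace).re + ((K1 * (R0 + R1) * K1ᴴ).trace).re = 4 := by
    rw [Matrix.mul_assoc, Matrix.trace_mul_comm, Matrix.mul_assoc K1, Matrix.trace_mul_comm K1,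
      Matrix.mul_assoc, Matrix.mul_assoc, ← Complex.add_re, ← Matrix.trace_add, ← Matrix.mul_add,
      hK, Matrix.mul_one, tv_trace, tv_add, t0, t1]
    norm_num
  have split : ∀ K : Matrix (Fin 2) (Fin 2) ℂ,
      2 * (((K * R0 * Kᴴ * C0).trace).re + ((K * R1 * Kᴴ * C1).trace).re)
      = ((K * (R0 + R1) * Kᴴ).trace).re + ((K * (R0 - R1) * Kᴴ * (C0 - C1)).trace).re := by
    intro K
    have : K * (R0 + R1) * Kᴴ = K * (R0 + R1) * Kᴴ * (C0 + C1) := by rw [h, Matrix.mul_one]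
    rw [this]
    simp only [Matrix.mul_add, Matrix.add_mul, Matrix.mul_sub, Matrix.sub_mul, Matrix.trace_add,
      Matrix.trace_sub, Complex.add_re, Complex.sub_re]
    ring
  have s0 := split K0
  have s1 := split K1
  unfold XX
  linarith

/-- Result 1 (upper bound): for any sequential qubit strategy with
`W_AB = α`, one has `W_AC ≤ (4 + √2 + √(16α − 16α² − 2))/8`. -/
theorem sequential_qrac_tradeoff_upper_bound
    (ρ : Bool × Bool → Matrix (Fin 2) (Fin 2) ℂ)
    (K C : Bool → Bool → Matrix (Fin 2) (Fin 2) ℂ)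
    (hvalid : ValidStrategy ρ K C)
    (α : ℝ) (hα : α ∈ Set.Icc (1 / 2 : ℝ) ((2 + Real.sqrt 2) / 4))
    (hAB : WAB ρ K = α) :
    WAC ρ K C ≤ (4 + Real.sqrt 2 + Real.sqrt (16 * α - 16 * α ^ 2 - 2)) / 8 := by
  obtain ⟨hρ, hK, hC, hC1⟩ := hvalid
  have ht : ∀ x, tv (ρ x) = 1 / 2 := by
    intro x
    have := tv_trace (ρ x)
    rw [(hρ x).2] at this
    simp at this
    linarith
  have hR : ∀ a b, tv (ρ a + ρ b) = 1 := by
    intro a b; rw [tv_add, ht, ht]; norm_num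
  have hH : ∀ a b, (ρ a + ρ b).IsHermitian := fun a b => (hρ a).1.1.add (hρ b).1.1
  set e0 := bv ((ρ (false, false) + ρ (false, true)) - (ρ (true, false) + ρ (true, true))) with he0
  set e1 := bv ((ρ (false, false) + ρ (true, false)) - (ρ (false, true) + ρ (true, true))) with he1
  set b : Bool → Q3 := fun y => bv ((K y false)ᴴ * K y false - (K y true)ᴴ * K y true) with hb
  have hb1 : ∀ y, ‖b y‖ ≤ 1 := by
    intro y
    simp only [hb, bv_sub]
    exact diff_norm (Matrix.posSemidef_conjTranspose_mul_self _)
      (Matrix.posSemidef_conjTranspose_mul_self _) (by rw [← tv_add, hK, tv_one])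
  have hp : ‖e0 + e1‖ ≤ 2 := by
    have e : e0 + e1 = (2:ℝ) • (bv (ρ (false, false)) - bv (ρ (true, true))) := by
      rw [he0, he1]; simp only [bv_sub, bv_add]; module
    rw [e, norm_smul]
    have := diff_norm (hρ (false, false)).1 (hρ (true, true)).1 (by rw [ht, ht]; norm_num)
    norm_num; linarith
  have hm : ‖e0 - e1‖ ≤ 2 := by
    have e : e0 - e1 = (2:ℝ) • (bv (ρ (false, true)) - bv (ρ (true, false))) := by
      rw [he0, he1]; simp only [bv_sub, bv_add]; module
    rw [e, norm_smul]
    have := diff_norm (hρ (false, true)).1 (hρ (true, false)).1 (by rw [ht, ht]; norm_num)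
    norm_num; linarith
  have hs : inner ℝ e0 (b false) + inner ℝ e1 (b true) = 8 * α - 4 := by
    have A0 := ab_term _ _ _ _ (hH (false, false) (false, true)) (hH (true, false) (true, true))
      (hR _ _) (hR _ _) (hK false)
    have A1 := ab_term _ _ _ _ (hH (false, false) (true, false)) (hH (false, true) (true, true))
      (hR _ _) (hR _ _) (hK true)
    have hW := hAB
    simp only [WAB, bit, Fintype.sum_prod_type, Fintype.sum_bool, if_true, if_false,
      Bool.false_eq_true] at hW
    simp only [Matrix.add_mul, Matrix.trace_add, Complex.add_re] at A0 A1
    rw [← he0] at A0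
    rw [← he1] at A1
    simp only [hb]
    linarith
  have G := geom_bound e0 e1 (b false) (b true) hp hm (hb1 _) (hb1 _) (by rw [hs]; linarith [hα.1])
  have B0 : ∀ y, _ := fun y => ac_term _ _ _ _ _ _ (hH (false, false) (false, true))
    (hH (true, false) (true, true)) (hR _ _) (hR _ _) (hK y) (hC false false) (hC false true)
    (hC1 false)
  have B1 : ∀ y, _ := fun y => ac_term _ _ _ _ _ _ (hH (false, false) (true, false))
    (hH (false, true) (true, true)) (hR _ _) (hR _ _) (hK y) (hC true false) (hC true true)
    (hC1 true)
  have B00 := B0 false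
  have B01 := B0 true
  have B10 := B1 false
  have B11 := B1 true
  rw [← he0] at B00 B01
  rw [← he1] at B10 B11
  simp only [Matrix.mul_add, Matrix.add_mul, Matrix.trace_add, Complex.add_re] at B00 B01 B10 B11
  have hsq : √(8 - (8 * α - 4) ^ 2) = 2 * √(16 * α - 16 * α ^ 2 - 2) := by
    have : 8 - (8 * α - 4) ^ 2 = 2 ^ 2 * (16 * α - 16 * α ^ 2 - 2) := by ring
    rw [this, Real.sqrt_mul (by norm_num), Real.sqrt_sq (by norm_num)]
  rw [hs, hsq] at G
  simp only [WAC, bit, Fintype.sum_prod_type, Fintype.sum_bool, if_true, if_false,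
      Bool.false_eq_true]
  simp only [hb] at G
  linarith

end
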